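/- arXiv:1409.4150 — 2 statements merged into one kernel-verified Lean document; each statement's English description precedes it below -/
import Mathlib

section
/- Complementary slackness: Let X = ∏_{i=1}^n [aᵢ, bᵢ] ⊂ ℝⁿ be a compact box with 0 ≤ aᵢ < bᵢ for each i, let μ be a finite signed Borel measure on X, let u* ∈ 𝒰(X) ∩ ℒ₁(X), and let γ* be a finite nonnegative Borel measure on X × X with γ₁* − γ₂* ≽_cvx μ. Then ∫_X u* dμ = ∫_{X×X} ‖x − y‖₁ dγ*(x,y) if and only if both of the following hold: (i) ∫_X u* d(γ₁* − γ₂*) = ∫_X u* dμ, and (ii) u*(x) − u*(y) = ‖x − y‖₁ for γ*-almost every (x,y). -/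
open MeasureTheory Set

/-- ℓ¹ distance on `Fin n → ℝ`. -/
noncomputable def l1dist {n : ℕ} (x y : Fin n → ℝ) : ℝ := ∑ i, |x i - y i|

/-- The box `∏ i, [a i, b i]` in `ℝⁿ`. -/
def box {n : ℕ} (a b : Fin n → ℝ) : Set (Fin n → ℝ) := {x | ∀ i, x i ∈ Set.Icc (a i) (b i)}

/-- `u ∈ 𝒰(X)`: continuous, coordinatewise nondecreasing and convex on `X`. -/
def memU {n : ℕ} (X : Set (Fin n → ℝ)) (u : (Fin n → ℝ) → ℝ) : Prop :=
  ContinuousOn u X ∧ (∀ x ∈ X, ∀ y ∈ X, (∀ i, x i ≤ y i) → u x ≤ u y) ∧ ConvexOn ℝ X u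

/-- `u ∈ ℒ₁(X)`: 1-Lipschitz with respect to the ℓ¹ norm on `X`. -/
def memL1 {n : ℕ} (X : Set (Fin n → ℝ)) (u : (Fin n → ℝ) → ℝ) : Prop :=
  ∀ x ∈ X, ∀ y ∈ X, u x - u y ≤ l1dist x y


/-- A function continuous on a compact set carrying a finite measure is integrable. -/
theorem ContinuousOn.integrable_of_measure_compl_eq_zero {α : Type*} [TopologicalSpace α]
    [T2Space α] [MeasurableSpace α] [OpensMeasurableSpace α] {ν : Measure α} [IsFiniteMeasure ν]
    {K : Set α} (hK : IsCompact K) (hν : ν Kᶜ = 0) {f : α → ℝ} (hf : ContinuousOn f K) :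
    Integrable f ν := by
  have h : IntegrableOn f K ν := hf.integrableOn_compact' hK hK.measurableSet
  rwa [IntegrableOn, Measure.restrict_eq_self_of_ae_mem (mem_ae_iff.mpr hν)] at h

theorem isCompact_box {n : ℕ} (a b : Fin n → ℝ) : IsCompact (box a b) := by
  have h : box a b = Set.Icc a b := by
    ext x
    simp [box, Pi.le_def, forall_and]
  rw [h]
  exact isCompact_Icc

theorem continuous_l1dist {n : ℕ} :
    Continuous fun p : (Fin n → ℝ) × (Fin n → ℝ) => l1dist p.1 p.2 := by
  unfold l1dist
  fun_prop

/-- **Complementary slackness.** With `μ` represented by its positive/negative parts `μp, μn`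
supported in the box `X`, a feasible `u*` and a feasible dual `γ*` have equal objective values
iff (i) `∫ u* d(γ₁* − γ₂*) = ∫ u* dμ`, and (ii) `u*(x) − u*(y) = ‖x − y‖₁` for `γ*`-a.e. `(x,y)`. -/
theorem complementary_slackness {n : ℕ} (a b : Fin n → ℝ) (hab : ∀ i, 0 ≤ a i ∧ a i < b i)
    (μp μn : Measure (Fin n → ℝ)) [IsFiniteMeasure μp] [IsFiniteMeasure μn]
    (hμp : μp (box a b)ᶜ = 0) (hμn : μn (box a b)ᶜ = 0)
    (u : (Fin n → ℝ) → ℝ) (hu : memU (box a b) u) (hu1 : memL1 (box a b) u)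
    (γ : Measure ((Fin n → ℝ) × (Fin n → ℝ))) (hγfin : IsFiniteMeasure γ)
    (hγsupp : γ ((box a b ×ˢ box a b)ᶜ) = 0)
    (hdom : ∀ v : (Fin n → ℝ) → ℝ, memU (box a b) v →
      (∫ x, v x ∂μp) - (∫ x, v x ∂μn) ≤
        (∫ x, v x ∂(γ.map Prod.fst)) - (∫ x, v x ∂(γ.map Prod.snd))) :
    ((∫ x, u x ∂μp) - (∫ x, u x ∂μn) = ∫ p, l1dist p.1 p.2 ∂γ) ↔
      (((∫ x, u x ∂(γ.map Prod.fst)) - (∫ x, u x ∂(γ.map Prod.snd)) =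
          (∫ x, u x ∂μp) - (∫ x, u x ∂μn)) ∧
        (∀ᵐ p ∂γ, u p.1 - u p.2 = l1dist p.1 p.2)) := by
  have hX := isCompact_box a b
  have hmaps : ∀ᵐ p ∂γ, p.1 ∈ box a b ∧ p.2 ∈ box a b := mem_ae_iff.mpr hγsupp
  have hfst : γ.map Prod.fst (box a b)ᶜ = 0 := by
    rw [Measure.map_apply measurable_fst hX.measurableSet.compl]
    exact mem_ae_iff.mp (hmaps.mono fun p hp => hp.1)
  have hsnd : γ.map Prod.snd (box a b)ᶜ = 0 := by
    rw [Measure.map_apply measurable_snd hX.measurableSet.compl]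
    exact mem_ae_iff.mp (hmaps.mono fun p hp => hp.2)
  have hint1 := hu.1.integrable_of_measure_compl_eq_zero hX hfst
  have hint2 := hu.1.integrable_of_measure_compl_eq_zero hX hsnd
  have hdiff : Integrable (fun p => u p.1 - u p.2) γ :=
    (hint1.comp_measurable measurable_fst).sub (hint2.comp_measurable measurable_snd)
  have hdist : Integrable (fun p => l1dist p.1 p.2) γ :=
    continuous_l1dist.continuousOn.integrable_of_measure_compl_eq_zero (hX.prod hX) hγsupp
  have hmarg : (∫ x, u x ∂(γ.map Prod.fst)) - (∫ x, u x ∂(γ.map Prod.snd)) =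
      ∫ p, (u p.1 - u p.2) ∂γ := by
    rw [integral_map measurable_fst.aemeasurable hint1.aestronglyMeasurable,
      integral_map measurable_snd.aemeasurable hint2.aestronglyMeasurable]
    exact (integral_sub (hint1.comp_measurable measurable_fst)
      (hint2.comp_measurable measurable_snd)).symm
  have hle : (fun p => u p.1 - u p.2) ≤ᵐ[γ] fun p => l1dist p.1 p.2 :=
    hmaps.mono fun p hp => hu1 p.1 hp.1 p.2 hp.2
  have hdom_u := hdom u hu
  have hmono := integral_mono_ae hdiff hdist hle
  have hiff := integral_eq_iff_of_ae_le hdiff hdist hle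
  constructor
  · intro h
    exact ⟨by linarith, hiff.mp (by linarith)⟩
  · rintro ⟨h, hae⟩
    have := hiff.mpr hae
    linarith
end

section
/- Existence of an optimal mechanism: Let X = ∏_{i=1}^n [aᵢ, bᵢ] ⊂ ℝⁿ be a compact box with 0 ≤ aᵢ < bᵢ for each i, and let μ be a finite signed Borel measure on X with μ(X) = 0. Then the supremum sup_{u ∈ 𝒰(X) ∩ ℒ₁(X)} ∫_X u dμ is finite and is attained by some u* ∈ 𝒰(X) ∩ ℒ₁(X). -/
open MeasureTheory Set

open scoped BoundedContinuousFunction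

lemma box_eq_Icc {n : ℕ} (a b : Fin n → ℝ) : box a b = Set.Icc a b := by
  ext x
  simp [box, Set.mem_Icc, Pi.le_def, forall_and]

lemma l1dist_le {n : ℕ} (x y : Fin n → ℝ) : l1dist x y ≤ n * dist x y := by
  calc l1dist x y ≤ ∑ _i : Fin n, dist x y :=
        Finset.sum_le_sum fun i _ => by
          rw [← Real.dist_eq]
          exact dist_le_pi_dist x y i
    _ = n * dist x y := by simp

lemma l1dist_le_of_mem_box {n : ℕ} {a b x y : Fin n → ℝ} (hx : x ∈ box a b) (hy : y ∈ box a b) :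
    l1dist x y ≤ l1dist b a :=
  Finset.sum_le_sum fun i _ => by
    have h₁ := hx i
    have h₂ := hy i
    exact (abs_sub_le_iff.2 ⟨by linarith [h₁.2, h₂.1], by linarith [h₁.1, h₂.2]⟩).trans
      (le_abs_self _)

lemma l1dist_comm {n : ℕ} (x y : Fin n → ℝ) : l1dist x y = l1dist y x :=
  Finset.sum_congr rfl fun _ _ => abs_sub_comm _ _

/-- The feasible functions on the box `[a, b]`, normalized to vanish at the corner `a`. -/
def normalizedFeasible {n : ℕ} (a b : Fin n → ℝ) : Set (box a b →ᵇ ℝ) :=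
  {f | (∀ x : box a b, (x : Fin n → ℝ) = a → f x = 0) ∧
    (∀ x y : box a b, (∀ i, x.1 i ≤ y.1 i) → f x ≤ f y) ∧
    (∀ x y z : box a b, ∀ s t : ℝ, 0 ≤ s → 0 ≤ t → s + t = 1 →
      z.1 = s • x.1 + t • y.1 → f z ≤ s * f x + t * f y) ∧
    ∀ x y : box a b, f x - f y ≤ l1dist x.1 y.1}

lemma isClosed_normalizedFeasible {n : ℕ} (a b : Fin n → ℝ) :
    IsClosed (normalizedFeasible a b) := by
  have hev (x : box a b) : Continuous fun f : box a b →ᵇ ℝ => f x :=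
    continuous_eval_const x
  simp only [normalizedFeasible, Set.ofPred_and, Set.ofPred_forall]
  refine .inter ?_ (.inter ?_ (.inter ?_ ?_))
  · exact isClosed_iInter fun x => isClosed_iInter fun _ => isClosed_eq (hev x) continuous_const
  · exact isClosed_iInter fun x => isClosed_iInter fun y => isClosed_iInter fun _ =>
      isClosed_le (hev x) (hev y)
  · exact isClosed_iInter fun x => isClosed_iInter fun y => isClosed_iInter fun z =>
      isClosed_iInter fun s => isClosed_iInter fun t => isClosed_iInter fun _ =>
      isClosed_iInter fun _ => isClosed_iInter fun _ => isClosed_iInter fun _ =>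
      isClosed_le (hev z) (((hev x).const_mul s).add ((hev y).const_mul t))
  · exact isClosed_iInter fun x => isClosed_iInter fun y =>
      isClosed_le ((hev x).sub (hev y)) continuous_const

lemma isCompact_normalizedFeasible {n : ℕ} {a b : Fin n → ℝ} (hab : a ≤ b) :
    IsCompact (normalizedFeasible a b) := by
  have : CompactSpace (box a b) := by
    rw [box_eq_Icc]
    infer_instance
  have ha : a ∈ box a b := by
    rw [box_eq_Icc]
    exact Set.left_mem_Icc.2 hab
  refine BoundedContinuousFunction.arzela_ascoli₂ (Set.Icc (-l1dist b a) (l1dist b a))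
    isCompact_Icc _ (isClosed_normalizedFeasible a b) ?_ ?_
  · rintro f x ⟨h0, -, -, hL⟩
    have h₁ := (hL x ⟨a, ha⟩).trans (l1dist_le_of_mem_box x.2 ha)
    have h₂ := (hL ⟨a, ha⟩ x).trans (l1dist_le_of_mem_box ha x.2)
    rw [h0 ⟨a, ha⟩ rfl] at h₁ h₂
    exact ⟨by linarith, by linarith⟩
  · refine Metric.equicontinuous_of_continuity_modulus (fun r => n * r) ?_ _ ?_
    · have : Filter.Tendsto (fun r : ℝ => (n : ℝ) * r) (nhds 0) (nhds (n * 0)) :=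
        (continuous_const_mul (n : ℝ)).tendsto 0
      simpa using this
    · rintro x y ⟨f, -, -, -, hL⟩
      have h₁ := hL x y
      have h₂ := hL y x
      rw [l1dist_comm] at h₂
      exact (abs_sub_le_iff.2 ⟨h₁, h₂⟩).trans (l1dist_le _ _)

lemma continuous_integral_comp {α β : Type*} [TopologicalSpace α]
    [TopologicalSpace β] [MeasurableSpace β] [OpensMeasurableSpace β] (μ : Measure β)
    [IsFiniteMeasure μ] (r : C(β, α)) :
    Continuous fun f : α →ᵇ ℝ => ∫ x, f (r x) ∂μ := by
  refine (LipschitzWith.of_dist_le_mul (K := (μ univ).toNNReal) fun f g => ?_).continuous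
  have hint (h : α →ᵇ ℝ) : Integrable (fun x => h (r x)) μ :=
    (h.compContinuous r).integrable μ
  rw [dist_eq_norm, ← integral_sub (hint f) (hint g), mul_comm]
  refine norm_integral_le_of_norm_le_const (.of_forall fun x => ?_)
  rw [← dist_eq_norm]
  exact BoundedContinuousFunction.dist_coe_le_dist _

/-- The coordinatewise retraction of `ℝⁿ` onto the box `[a, b]`. -/
def boxRetraction {n : ℕ} {a b : Fin n → ℝ} (hab : a ≤ b) : C(Fin n → ℝ, box a b) where
  toFun x := ⟨fun i => max (a i) (min (b i) (x i)), fun i =>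
    ⟨le_max_left _ _, max_le (hab i) (min_le_left _ _)⟩⟩
  continuous_toFun := by fun_prop

lemma boxRetraction_of_mem {n : ℕ} {a b : Fin n → ℝ} (hab : a ≤ b) {x : Fin n → ℝ}
    (hx : x ∈ box a b) : boxRetraction hab x = ⟨x, hx⟩ := by
  ext i
  simp [boxRetraction, (hx i).1, (hx i).2]

lemma memU_comp_boxRetraction {n : ℕ} {a b : Fin n → ℝ} (hab : a ≤ b) {f : box a b →ᵇ ℝ}
    (hf : f ∈ normalizedFeasible a b) : memU (box a b) fun x => f (boxRetraction hab x) := by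
  obtain ⟨-, hm, hc, -⟩ := hf
  have hconv : Convex ℝ (box a b) := by
    rw [box_eq_Icc]
    exact convex_Icc a b
  refine ⟨(f.continuous.comp (boxRetraction hab).continuous).continuousOn, ?_, hconv, ?_⟩
  · intro x hx y hy hxy
    simpa only [boxRetraction_of_mem hab, hx, hy] using hm ⟨x, hx⟩ ⟨y, hy⟩ hxy
  · intro x hx y hy s t hs ht hst
    have hz := hconv hx hy hs ht hst
    simpa only [boxRetraction_of_mem hab, hx, hy, hz, smul_eq_mul] using
      hc ⟨x, hx⟩ ⟨y, hy⟩ ⟨_, hz⟩ s t hs ht hst rfl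

lemma memL1_comp_boxRetraction {n : ℕ} {a b : Fin n → ℝ} (hab : a ≤ b) {f : box a b →ᵇ ℝ}
    (hf : f ∈ normalizedFeasible a b) : memL1 (box a b) fun x => f (boxRetraction hab x) := by
  intro x hx y hy
  simpa only [boxRetraction_of_mem hab, hx, hy] using hf.2.2.2 ⟨x, hx⟩ ⟨y, hy⟩

lemma exists_normalizedFeasible_eq {n : ℕ} {a b : Fin n → ℝ} {v : (Fin n → ℝ) → ℝ}
    (hU : memU (box a b) v) (hL : memL1 (box a b) v) :
    ∃ f ∈ normalizedFeasible a b, ∀ x : box a b, f x = v x - v a := by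
  have : CompactSpace (box a b) := by
    rw [box_eq_Icc]
    infer_instance
  obtain ⟨hcont, hm, -, hc⟩ := hU
  let f : C(box a b, ℝ) := ⟨fun x => v x - v a, hcont.domRestrict.sub continuous_const⟩
  refine ⟨BoundedContinuousFunction.mkOfCompact f, ⟨?_, ?_, ?_, ?_⟩, fun x => rfl⟩
  · intro x hx
    change v x - v a = 0
    rw [hx, sub_self]
  · intro x y hxy
    exact sub_le_sub_right (hm x x.2 y y.2 hxy) _
  · intro x y z s t hs ht hst hz
    change v z - v a ≤ s * (v x - v a) + t * (v y - v a)
    have h := hc x.2 y.2 hs ht hst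
    rw [← hz, smul_eq_mul, smul_eq_mul] at h
    linear_combination h + v a * hst
  · intro x y
    change v x - v a - (v y - v a) ≤ _
    linarith [hL x x.2 y y.2]

lemma integral_eq_integral_comp_boxRetraction_add {n : ℕ} {a b : Fin n → ℝ} (hab : a ≤ b)
    (μ : Measure (Fin n → ℝ)) [IsFiniteMeasure μ] (hμ : μ (box a b)ᶜ = 0)
    {v : (Fin n → ℝ) → ℝ} {f : box a b →ᵇ ℝ} {c : ℝ} (hf : ∀ x : box a b, f x = v x - c) :
    ∫ x, v x ∂μ = (∫ x, f (boxRetraction hab x) ∂μ) + μ.real univ * c := by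
  have hae : ∀ᵐ x ∂μ, v x = f (boxRetraction hab x) + c := by
    filter_upwards [mem_ae_iff.2 hμ] with x hx
    rw [boxRetraction_of_mem hab hx, hf, sub_add_cancel]
  have hint : Integrable (fun x => f (boxRetraction hab x)) μ :=
    (f.compContinuous (boxRetraction hab)).integrable μ
  rw [integral_congr_ae hae, integral_add hint (integrable_const c), integral_const, smul_eq_mul]

/-- **Existence of an optimal mechanism.** For the box `X` and a finite signed Borel measure
`μ` on `X` (represented by `μp, μn` supported in `X`) with `μ(X) = 0`, the supremum of
`∫ u dμ` over `u ∈ 𝒰(X) ∩ ℒ₁(X)` is finite and attained by some `u*`: there is a feasible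
`u*` whose objective value dominates that of every feasible `u` (in particular the value set
is bounded above and its supremum is attained). -/
theorem exists_optimal_mechanism {n : ℕ} (a b : Fin n → ℝ) (hab : ∀ i, 0 ≤ a i ∧ a i < b i)
    (μp μn : Measure (Fin n → ℝ)) [IsFiniteMeasure μp] [IsFiniteMeasure μn]
    (hμp : μp (box a b)ᶜ = 0) (hμn : μn (box a b)ᶜ = 0)
    (hzero : μp Set.univ = μn Set.univ) :
    ∃ u : (Fin n → ℝ) → ℝ, memU (box a b) u ∧ memL1 (box a b) u ∧
      ∀ v : (Fin n → ℝ) → ℝ, memU (box a b) v → memL1 (box a b) v →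
        (∫ x, v x ∂μp) - (∫ x, v x ∂μn) ≤ (∫ x, u x ∂μp) - (∫ x, u x ∂μn) := by
  have hab' : a ≤ b := fun i => (hab i).2.le
  obtain ⟨f₀, hf₀, -⟩ := exists_normalizedFeasible_eq (a := a) (b := b) (v := fun _ => 0)
    ⟨continuousOn_const, fun _ _ _ _ _ => le_rfl, by
      rw [box_eq_Icc]
      exact convexOn_const 0 (convex_Icc a b)⟩
    (fun x _ y _ => by
      rw [sub_self]
      exact Finset.sum_nonneg fun _ _ => abs_nonneg _)
  obtain ⟨f, hf, hmax⟩ := (isCompact_normalizedFeasible hab').exists_isMaxOn ⟨f₀, hf₀⟩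
    ((continuous_integral_comp μp (boxRetraction hab')).sub
      (continuous_integral_comp μn (boxRetraction hab'))).continuousOn
  refine ⟨_, memU_comp_boxRetraction hab' hf, memL1_comp_boxRetraction hab' hf, ?_⟩
  intro v hU hL
  obtain ⟨g, hg, hgv⟩ := exists_normalizedFeasible_eq hU hL
  rw [integral_eq_integral_comp_boxRetraction_add hab' μp hμp hgv,
    integral_eq_integral_comp_boxRetraction_add hab' μn hμn hgv,
    show μp.real univ = μn.real univ by simp only [Measure.real, hzero], add_sub_add_right_eq_sub]
  exact hmax hg
end
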